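/- Let A be a pushdown timed automaton with pattern graph G. For any states s₀ and s₁, any pattern η, any stack words w₀ and w₁, and any discrete valuations u₀, u₁ : K → ℕ with u₀(0) = 0: (s₀,u₀,w₀) →*_{A,η} (s₁,u₁,w₁) iff (s₀, init(η), u₀, w₀) →*_G (s₁, η, u₁, w₁). -/

import Mathlib

open scoped BigOperators

namespace PTApaper

/-! ## Clock valuations -/

/-- A (raw) clock valuation on clocks `x_0, …, x_k`. -/
abbrev Val (k : ℕ) := Fin (k+1) → ℝ

/-- A discrete clock valuation. -/
abbrev DVal (k : ℕ) := Fin (k+1) → ℕ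

/-- A clock valuation takes nonnegative values. -/
def IsVal {k : ℕ} (v : Val k) : Prop := ∀ i, 0 ≤ v i

/-- A valuation is initial if the auxiliary clock `x_0` has value 0. -/
def Initial {k : ℕ} (v : Val k) : Prop := v 0 = 0

/-- The integral part `int(v)` of a valuation. -/
noncomputable def intPart {k : ℕ} (v : Val k) : DVal k := fun i => (⌊v i⌋).toNat

/-- The fractional parts of the relative representation `rel(v)`:
`fract(rel(v))(0) = fract (1 - fract (v 0))` and
`fract(rel(v))(i) = fract (fract (v i) + fract(rel(v))(0))` for `i ∈ K⁺`. -/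
noncomputable def relFract {k : ℕ} (v : Val k) : Fin (k+1) → ℝ := fun i =>
  if i = 0 then Int.fract (1 - Int.fract (v 0))
  else Int.fract (Int.fract (v i) + Int.fract (1 - Int.fract (v 0)))

/-- Synchronous clock progress `v + δ`. -/
def shift {k : ℕ} (v : Val k) (δ : ℝ) : Val k := fun i => v i + δ

/-- Clock reset `v↓_r`. -/
def resetVal {k : ℕ} (r : Finset (Fin (k+1))) (v : Val k) : Val k :=
  fun i => if i ∈ r then 0 else v i

/-! ## Patterns -/

/-- A raw pattern: a finite sequence of subsets of `K⁰ ∪ K¹`, where the index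
`(i, false)` stands for `i⁰` and `(i, true)` stands for `i¹`. -/
abbrev PatSeq (k : ℕ) := List (Finset (Fin (k+1) × Bool))

/-- The well-formedness conditions making `η = p₀,…,p_n` a pattern:
`0 ≤ n < 2(k+1)`, the `p_m` are nonempty and pairwise disjoint, `0⁰ ∈ p₀`,
and `p₀ ∪ … ∪ p_n = K⁰ ∪ K¹`. -/
def IsPattern {k : ℕ} (η : PatSeq k) : Prop :=
  η.length ≤ 2*(k+1) ∧
  (∀ p ∈ η, p.Nonempty) ∧
  η.Pairwise Disjoint ∧
  ((0 : Fin (k+1)), false) ∈ η.getD 0 ∅ ∧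
  (∀ x : Fin (k+1) × Bool, ∃ p ∈ η, x ∈ p)

/-- `bval v₀ v₁ b` is `v_b`. -/
def bval {k : ℕ} (v₀ v₁ : Val k) : Bool → Val k
  | false => v₀
  | true => v₁

/-- The defining ordering condition for "`(v₀,v₁)` has pattern `η = p₀,…,p_n`":
for all positions `m, m'`, copies `b, b'` and clocks `i, i'` with `i^b ∈ p_m` and
`i'^{b'} ∈ p_{m'}`, `fract(rel(v_b))(i) = fract(rel(v_{b'}))(i')` iff `m = m'`, and
`fract(rel(v_b))(i) < fract(rel(v_{b'}))(i')` iff `m < m'`. -/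
def HasPatternOrd {k : ℕ} (v₀ v₁ : Val k) (η : PatSeq k) : Prop :=
  ∀ m m' : Fin η.length, ∀ b b' : Bool, ∀ i i' : Fin (k+1),
    (i, b) ∈ η.get m → (i', b') ∈ η.get m' →
      ((relFract (bval v₀ v₁ b) i = relFract (bval v₀ v₁ b') i' ↔ m = m') ∧
       (relFract (bval v₀ v₁ b) i < relFract (bval v₀ v₁ b') i' ↔ (m : ℕ) < (m' : ℕ)))

/-- `(v₀,v₁)` has pattern `η` (written `[(v₀,v₁)] = η`). -/
def PatternOf {k : ℕ} (v₀ v₁ : Val k) (η : PatSeq k) : Prop :=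
  IsPattern η ∧ HasPatternOrd v₀ v₁ η

/-- A pattern is initial if it is the pattern of `(v₀,v₀)` for some initial valuation `v₀`. -/
def InitialPattern {k : ℕ} (η : PatSeq k) : Prop :=
  ∃ v₀ : Val k, IsVal v₀ ∧ Initial v₀ ∧ PatternOf v₀ v₀ η

/-- The equivalence `(v₀¹,v₁) ≈ (v₀²,v₂)`: same pattern and same integral parts. -/
def PairEquiv {k : ℕ} (va vb vc vd : Val k) : Prop :=
  (∃ η : PatSeq k, PatternOf va vb η ∧ PatternOf vc vd η) ∧
  intPart va = intPart vc ∧ intPart vb = intPart vd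

/-! ## now-position, Next, next, reset -/

/-- The index of the now-position, i.e. the position containing `0¹`. -/
def nowIdx {k : ℕ} (η : PatSeq k) : ℕ :=
  η.findIdx fun p => decide (((0 : Fin (k+1)), true) ∈ p)

/-- A merge-pattern: the now-position is the singleton `{0¹}`. -/
def IsMergePat {k : ℕ} (η : PatSeq k) : Prop :=
  η.getD (nowIdx η) ∅ = ({((0 : Fin (k+1)), true)} : Finset (Fin (k+1) × Bool))

/-- A split-pattern: a pattern that is not a merge-pattern. -/
def IsSplitPat {k : ℕ} (η : PatSeq k) : Prop := ¬ IsMergePat η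

/-- The next pattern `Next(η)`. -/
def NextPat {k : ℕ} (η : PatSeq k) : PatSeq k :=
  let i := nowIdx η
  if η.getD i ∅ = ({((0 : Fin (k+1)), true)} : Finset (Fin (k+1) × Bool)) then
    -- merge case : `p₀, …, p_{i-1} ∪ {0¹}, p_{i+1}, …, p_n`
    η.take (i-1) ++ [η.getD (i-1) ∅ ∪ {((0 : Fin (k+1)), true)}] ++ η.drop (i+1)
  else if i = 0 then
    -- split case with `i = 0` : `p₀ ∖ {0¹}, p₁, …, p_n, {0¹}`
    (η.getD 0 ∅ \ {((0 : Fin (k+1)), true)}) :: (η.drop 1 ++ [{((0 : Fin (k+1)), true)}])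
  else
    -- split case with `i > 0` : `p₀, …, p_{i-1}, {0¹}, p_i ∖ {0¹}, p_{i+1}, …, p_n`
    η.take i ++ [{((0 : Fin (k+1)), true)}, η.getD i ∅ \ {((0 : Fin (k+1)), true)}]
      ++ η.drop (i+1)

/-- The counter update of `next(η,u)`. -/
def nextD {k : ℕ} (η : PatSeq k) (u : DVal k) : DVal k :=
  let i := nowIdx η
  if η.getD i ∅ = ({((0 : Fin (k+1)), true)} : Finset (Fin (k+1) × Bool)) then
    fun j =>
      if j = 0 then (if i = 1 then u 0 + 1 else u 0)
      else (if (j, true) ∈ η.getD (i-1) ∅ then u j + 1 else u j)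
  else u

/-- `next(η,u)`. -/
def nextPair {k : ℕ} (η : PatSeq k) (u : DVal k) : PatSeq k × DVal k :=
  (NextPat η, nextD η u)

/-- The pattern part of `reset_r(η,u)`: all indices `j¹`, `j ∈ r`, are moved into the
now-position, and entries that become empty are deleted. -/
def ResetPat {k : ℕ} (r : Finset (Fin (k+1))) (η : PatSeq k) : PatSeq k :=
  let r1 : Finset (Fin (k+1) × Bool) := r.image (fun j => (j, true))
  let i := nowIdx η
  (η.mapIdx (fun m p => if m = i then p ∪ r1 else p \ r1)).filter (fun p => decide (p ≠ ∅))

/-- The counter update of `reset_r(η,u)`. -/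
def resetD {k : ℕ} (r : Finset (Fin (k+1))) (u : DVal k) : DVal k :=
  fun j => if j ∈ r then 0 else u j

/-- `reset_r(η,u)`. -/
def resetPair {k : ℕ} (r : Finset (Fin (k+1))) (η : PatSeq k) (u : DVal k) :
    PatSeq k × DVal k :=
  (ResetPat r η, resetD r u)

/-! ## Pattern changes -/

/-- `v` has no pattern change for `δ`. -/
def NoChange {k : ℕ} (v₀ v : Val k) (δ : ℝ) : Prop :=
  ∃ η : PatSeq k, PatternOf v₀ v η ∧
    ∀ δ', 0 ≤ δ' → δ' ≤ δ → PatternOf v₀ (shift v δ') η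

/-- `v` has one pattern change for `δ`. -/
def OneChange {k : ℕ} (v₀ v : Val k) (δ : ℝ) : Prop :=
  ∃ η η' : PatSeq k, PatternOf v₀ v η ∧ PatternOf v₀ (shift v δ) η' ∧
    NextPat η = η' ∧
    ((∀ δ', 0 < δ' → δ' < δ → PatternOf v₀ (shift v δ') η) ∨
     (∀ δ', 0 < δ' → δ' < δ → PatternOf v₀ (shift v δ') η'))

/-- `v` has `n` pattern changes for `δ` (for `n ≥ 1`): `δ = δ₁ + … + δ_n` with each
`δ_j > 0` and `v + δ₁ + … + δ_j` has one pattern change for `δ_{j+1}`. -/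
def NChanges {k : ℕ} (v₀ v : Val k) (n : ℕ) (δ : ℝ) : Prop :=
  ∃ d : ℕ → ℝ, (∀ j < n, 0 < d j) ∧ (∑ j ∈ Finset.range n, d j) = δ ∧
    ∀ j < n, OneChange v₀ (shift v (∑ j' ∈ Finset.range j, d j')) (d j)

/-! ## Clock constraints -/

/-- Comparison operators `<, ≤, =, ≥, >`. -/
inductive CCmp | lt | le | eq | ge | gt

/-- Evaluation of a comparison operator on reals. -/
def CCmp.evalR : CCmp → ℝ → ℝ → Prop
  | .lt, a, b => a < b
  | .le, a, b => a ≤ b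
  | .eq, a, b => a = b
  | .ge, a, b => a ≥ b
  | .gt, a, b => a > b

/-- Clock constraints over the clocks `x_1, …, x_k` (indexed by `Fin k`, clock
`x_{i+1}` for `i : Fin k`): Boolean combinations of `x_i - x_j # d` and `x_i # d`. -/
inductive CC (k : ℕ)
  | diff (i j : Fin k) (op : CCmp) (d : ℕ) : CC k
  | single (i : Fin k) (op : CCmp) (d : ℕ) : CC k
  | not (c : CC k) : CC k
  | and (c₁ c₂ : CC k) : CC k

/-- `v ∈ c` : the valuation `v` satisfies the clock constraint `c`. -/
def CC.sat {k : ℕ} (v : Val k) : CC k → Prop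
  | .diff i j op d => op.evalR (v i.succ - v j.succ) (d : ℝ)
  | .single i op d => op.evalR (v i.succ) (d : ℝ)
  | .not c => ¬ c.sat v
  | .and c₁ c₂ => c₁.sat v ∧ c₂.sat v

/-- The position (in `η`) of an index `x ∈ K⁰ ∪ K¹`. -/
def posOf {k : ℕ} (η : PatSeq k) (x : Fin (k+1) × Bool) : ℕ :=
  η.findIdx fun p => decide (x ∈ p)

/-- The truth value, given by pattern `η`, of the fractional ordering
`fract(x_a) > fract(x_b)`. -/
def fracGtP {k : ℕ} (η : PatSeq k) (a b : Fin (k+1)) : Prop :=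
  let i := posOf η ((0 : Fin (k+1)), true)
  let m₁ := posOf η (a, true)
  let m₂ := posOf η (b, true)
  (m₁ < i ∧ i ≤ m₂) ∨ (m₂ < m₁ ∧ m₁ < i) ∨ (i ≤ m₂ ∧ m₂ < m₁)

/-- The truth value, given by pattern `η`, of `fract(x_a) = fract(x_b)`. -/
def fracEqP {k : ℕ} (η : PatSeq k) (a b : Fin (k+1)) : Prop :=
  posOf η (a, true) = posOf η (b, true)

/-- The truth value, given by pattern `η`, of `fract(x_a) = 0`. -/
def fracZeroP {k : ℕ} (η : PatSeq k) (a : Fin (k+1)) : Prop :=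
  posOf η (a, true) = posOf η ((0 : Fin (k+1)), true)

/-- `u ∈ c^η` : the discrete valuation `u` satisfies the constraint `c^η`, obtained by
rewriting `c` as `I(c)` over integral parts and fractional orderings and substituting the
truth values of the fractional orderings determined by the pattern `η`. -/
def CC.satP {k : ℕ} (η : PatSeq k) (u : DVal k) : CC k → Prop
  | .diff i j op d =>
      let I : ℤ := (u i.succ : ℤ) - (u j.succ : ℤ)
      (match op with
      | .lt => I < d ∨ (I = d ∧ fracGtP η j.succ i.succ)
      | .le => I < d ∨ (I = d ∧ (fracGtP η j.succ i.succ ∨ fracEqP η i.succ j.succ))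
      | .eq => I = d ∧ fracEqP η i.succ j.succ
      | .ge => I > d ∨ (I = d ∧ (fracGtP η i.succ j.succ ∨ fracEqP η i.succ j.succ))
      | .gt => I > d ∨ (I = d ∧ fracGtP η i.succ j.succ))
  | .single i op d =>
      let I : ℤ := (u i.succ : ℤ)
      (match op with
      | .lt => I < d
      | .le => I < d ∨ (I = d ∧ fracZeroP η i.succ)
      | .eq => I = d ∧ fracZeroP η i.succ
      | .ge => I ≥ d
      | .gt => I > d ∨ (I = d ∧ ¬ fracZeroP η i.succ))
  | .not c => ¬ c.satP η u
  | .and c₁ c₂ => c₁.satP η u ∧ c₂.satP η u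

/-! ## Pushdown timed automata -/

/-- A pushdown timed automaton `⟨S, {x₁,…,x_k}, Inv, R, Γ, PD⟩`:
`Inv` assigns an invariant to each state, `R s s' = (Rc s s', Rr s s')` assigns a reset
condition and a set of clock resets (a subset of `K⁺`) to each edge, and
`PD s s' = (PDa s s', PDw s s')` assigns a stack operation to each edge. -/
structure PTA (k : ℕ) (S : Type) (Γ : Type) where
  Inv : S → CC k
  Rc : S → S → CC k
  Rr : S → S → Finset (Fin (k+1))
  hRr : ∀ s s', (0 : Fin (k+1)) ∉ Rr s s'
  PDa : S → S → Γ
  PDw : S → S → List Γ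

/-- A configuration `(s, v, w)` of a PTA. -/
abbrev Config (k : ℕ) (S Γ : Type) := S × Val k × List Γ

/-- The one-step transition relation `→_A` of a PTA. -/
def Step {k : ℕ} {S Γ : Type} (A : PTA k S Γ) (c₁ c₂ : Config k S Γ) : Prop :=
  -- progress transition
  (c₁.1 = c₂.1 ∧ c₁.2.2 = c₂.2.2 ∧
    ∃ δ : ℝ, 0 < δ ∧ c₂.2.1 = shift c₁.2.1 δ ∧
      ∀ δ', 0 ≤ δ' → δ' ≤ δ → (A.Inv c₁.1).sat (shift c₁.2.1 δ')) ∨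
  -- reset transition
  ((A.Inv c₁.1).sat c₁.2.1 ∧ (A.Rc c₁.1 c₂.1).sat c₁.2.1 ∧
    c₂.2.1 = resetVal (A.Rr c₁.1 c₂.1) c₁.2.1 ∧ (A.Inv c₂.1).sat c₂.2.1 ∧
    ∃ w : List Γ, c₁.2.2 = A.PDa c₁.1 c₂.1 :: w ∧ c₂.2.2 = A.PDw c₁.1 c₂.1 ++ w)

/-- `→*_A`, the transitive closure of `→_A`. -/
def Reach {k : ℕ} {S Γ : Type} (A : PTA k S Γ) : Config k S Γ → Config k S Γ → Prop :=
  Relation.TransGen (Step A)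

/-- `(s₀,u₀,w₀) →*_{A,η} (s₁,u₁,w₁)`. -/
def ReachPat {k : ℕ} {S Γ : Type} (A : PTA k S Γ) (η : PatSeq k)
    (s₀ : S) (u₀ : DVal k) (w₀ : List Γ) (s₁ : S) (u₁ : DVal k) (w₁ : List Γ) : Prop :=
  ∃ v₀ v₁ : Val k, IsVal v₀ ∧ IsVal v₁ ∧ v₀ 0 = 0 ∧
    intPart v₀ = u₀ ∧ intPart v₁ = u₁ ∧ PatternOf v₀ v₁ η ∧
    Reach A (s₀, v₀, w₀) (s₁, v₁, w₁)

/-! ## The pattern graph -/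

/-- A configuration `(s, η, u, w)` of the pattern graph. -/
abbrev GConfig (k : ℕ) (S Γ : Type) := S × PatSeq k × DVal k × List Γ

/-- The one-step transition relation `→_G` of the pattern graph `G` of a PTA `A`,
through progress edges, stay edges and reset edges. -/
def GStep {k : ℕ} {S Γ : Type} (A : PTA k S Γ) (c₁ c₂ : GConfig k S Γ) : Prop :=
  -- progress edge
  (c₁.1 = c₂.1 ∧ c₁.2.2.2 = c₂.2.2.2 ∧
    nextPair c₁.2.1 c₁.2.2.1 = (c₂.2.1, c₂.2.2.1) ∧
    (A.Inv c₁.1).satP c₁.2.1 c₁.2.2.1 ∧ (A.Inv c₁.1).satP c₂.2.1 c₂.2.2.1) ∨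
  -- stay edge
  (c₁ = c₂ ∧ IsMergePat c₁.2.1 ∧ (A.Inv c₁.1).satP c₁.2.1 c₁.2.2.1) ∨
  -- reset edge
  (resetPair (A.Rr c₁.1 c₂.1) c₁.2.1 c₁.2.2.1 = (c₂.2.1, c₂.2.2.1) ∧
    ((A.Rc c₁.1 c₂.1).and (A.Inv c₁.1)).satP c₁.2.1 c₁.2.2.1 ∧
    (A.Inv c₂.1).satP c₂.2.1 c₂.2.2.1 ∧
    ∃ w : List Γ, c₁.2.2.2 = A.PDa c₁.1 c₂.1 :: w ∧ c₂.2.2.2 = A.PDw c₁.1 c₂.1 ++ w)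

/-- `→*_G`, the transitive closure of `→_G`. -/
def GReach {k : ℕ} {S Γ : Type} (A : PTA k S Γ) : GConfig k S Γ → GConfig k S Γ → Prop :=
  Relation.TransGen (GStep A)

end PTApaper
namespace PTApaper

/-!
Letting time pass moves only the index `0¹` of a pattern: its level decreases continuously, wraps
around from `0` to `1`, and all other relative fractional parts stay put. Until `0¹` meets the
next level, the pattern and the integral parts change at most once, namely when `0¹` leaves a
shared level (a split); when it arrives at the next level it joins it (a merge), and exactly the
clocks on that level gain an integral unit. Resetting clocks moves their indices to the level of
`0¹`. Constraints depend only on the pattern and the integral parts, so mapping a valuation `v`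
of a run from `v₀` to the pattern of `(v₀, v)` and the integral parts of `v` is a bisimulation: a
delay decomposes into finitely many merges and splits, and conversely each edge of the pattern
graph lasts for a suitable positive delay.
-/

theorem transGen_of_simulation {α β : Type*} {r : α → α → Prop} {t : β → β → Prop}
    {sim : α → β → Prop}
    (hsim : ∀ {a a' b}, r a a' → sim a b → ∃ b', sim a' b' ∧ Relation.TransGen t b b')
    {a a' : α} {b : β} (hr : Relation.TransGen r a a') (hab : sim a b) :
    ∃ b', sim a' b' ∧ Relation.TransGen t b b' := by
  induction hr with
  | single hstep => exact hsim hstep hab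
  | tail _ hstep ih =>
    obtain ⟨b₁, hab₁, ht₁⟩ := ih
    obtain ⟨b₂, hab₂, ht₂⟩ := hsim hstep hab₁
    exact ⟨b₂, hab₂, ht₁.trans ht₂⟩

section LevelSeq

theorem map_sdiff_singleton_eq_self {α : Type*} [DecidableEq α] {L : List (Finset α)} {z : α}
    (hz : ∀ q ∈ L, z ∉ q) : L.map (· \ {z}) = L :=
  (List.map_congr_left fun q hq => by
    rw [Finset.sdiff_singleton_eq_erase, Finset.erase_eq_of_notMem (hz q hq)]
    rfl).trans (List.map_id L)

variable {α β : Type*} [LinearOrder β] {f g : α → β} {s : Set α} {η η' : List (Finset α)}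

/-- The list `η` enumerates the level sets of `f` on `s` in increasing order of their value.
For the relative fractional parts `f` of an initialized pair and `s` the whole of `K⁰ ∪ K¹`,
this is the pattern of the pair; other sets `s` occur while an index is being moved. -/
structure IsLevelSeq (f : α → β) (s : Set α) (η : List (Finset α)) : Prop where
  nonempty : ∀ p ∈ η, p.Nonempty
  mem_iff : ∀ x, x ∈ s ↔ ∃ p ∈ η, x ∈ p
  eq_of_mem : ∀ p ∈ η, ∀ x ∈ p, ∀ y ∈ p, f x = f y
  pairwise_lt : η.Pairwise fun p q => ∀ x ∈ p, ∀ y ∈ q, f x < f y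

namespace IsLevelSeq

theorem getElem_lt_iff (h : IsLevelSeq f s η) {i j : ℕ} {hi : i < η.length} {hj : j < η.length}
    {x y : α} (hx : x ∈ η[i]) (hy : y ∈ η[j]) : f x < f y ↔ i < j := by
  have hlt := List.pairwise_iff_getElem.1 h.pairwise_lt
  rcases lt_trichotomy i j with hij | rfl | hij
  · exact iff_of_true (hlt i j hi hj hij x hx y hy) hij
  · simp [h.eq_of_mem _ (List.getElem_mem hi) x hx y hy]
  · exact iff_of_false (hlt j i hj hi hij y hy x hx).not_gt hij.not_gt

theorem getElem_eq_iff (h : IsLevelSeq f s η) {i j : ℕ} {hi : i < η.length} {hj : j < η.length}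
    {x y : α} (hx : x ∈ η[i]) (hy : y ∈ η[j]) : f x = f y ↔ i = j := by
  simp only [eq_iff_le_not_lt, ← not_lt, h.getElem_lt_iff hx hy, h.getElem_lt_iff hy hx]

theorem length_le_card [Fintype α] (h : IsLevelSeq f s η) : η.length ≤ Fintype.card α := by
  choose x hx using fun m : Fin η.length => h.nonempty _ (η.get_mem m)
  have hinj : Function.Injective x := fun m m' hmm' =>
    Fin.ext ((h.getElem_eq_iff (hx m) (hx m')).1 (congrArg _ hmm'))
  simpa using Fintype.card_le_of_injective x hinj

theorem mem_iff_eq (h : IsLevelSeq f s η) {p : Finset α} (hp : p ∈ η) {x y : α} (hx : x ∈ p)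
    (hy : y ∈ s) : y ∈ p ↔ f y = f x := by
  refine ⟨fun hyp => h.eq_of_mem p hp y hyp x hx, fun heq => ?_⟩
  obtain ⟨q, hq, hyq⟩ := (h.mem_iff y).1 hy
  obtain ⟨i, hi, rfl⟩ := List.mem_iff_getElem.1 hp
  obtain ⟨j, hj, rfl⟩ := List.mem_iff_getElem.1 hq
  obtain rfl := (h.getElem_eq_iff hyq hx).1 heq
  exact hyq

theorem mem_list_iff (h : IsLevelSeq f s η) {p : Finset α} :
    p ∈ η ↔ ∃ x ∈ s, ∀ y, y ∈ p ↔ y ∈ s ∧ f y = f x := by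
  have key : ∀ q ∈ η, ∀ x ∈ q, ∀ y, y ∈ q ↔ y ∈ s ∧ f y = f x := fun q hq x hx y =>
    ⟨fun hy => ⟨(h.mem_iff y).2 ⟨q, hq, hy⟩, h.eq_of_mem q hq y hy x hx⟩,
      fun hy => (h.mem_iff_eq hq hx hy.1).2 hy.2⟩
  constructor
  · intro hp
    obtain ⟨x, hx⟩ := h.nonempty p hp
    exact ⟨x, (h.mem_iff x).2 ⟨p, hp, hx⟩, key p hp x hx⟩
  · rintro ⟨x, hxs, hpx⟩
    obtain ⟨q, hq, hx⟩ := (h.mem_iff x).1 hxs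
    rwa [show p = q from Finset.ext fun y => (hpx y).trans (key q hq x hx y).symm]

theorem unique (h : IsLevelSeq f s η) (h' : IsLevelSeq f s η') : η = η' := by
  let below (p q : Finset α) : Prop :=
    p.Nonempty ∧ q.Nonempty ∧ ∀ x ∈ p, ∀ y ∈ q, f x < f y
  have sorted : ∀ {ζ : List (Finset α)}, IsLevelSeq f s ζ → ζ.Pairwise below := fun hζ =>
    hζ.pairwise_lt.imp_of_mem fun hp hq hlt => ⟨hζ.nonempty _ hp, hζ.nonempty _ hq, hlt⟩
  have : Std.Irrefl below := ⟨fun _ ⟨⟨x, hx⟩, _, hlt⟩ => (hlt x hx x hx).false⟩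
  have : Std.Antisymm below :=
    ⟨fun _ _ ⟨⟨x, hx⟩, ⟨y, hy⟩, hlt⟩ ⟨_, _, hgt⟩ => ((hlt x hx y hy).not_gt (hgt y hy x hx)).elim⟩
  exact (sorted h).eq_of_mem_iff (sorted h') fun p => by rw [h.mem_list_iff, h'.mem_list_iff]

theorem congr_of_lt_iff (h : IsLevelSeq f s η)
    (hfg : ∀ x ∈ s, ∀ y ∈ s, f x < f y ↔ g x < g y) : IsLevelSeq g s η where
  nonempty := h.nonempty
  mem_iff := h.mem_iff
  eq_of_mem p hp x hx y hy := by
    have hxs := (h.mem_iff x).2 ⟨p, hp, hx⟩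
    have hys := (h.mem_iff y).2 ⟨p, hp, hy⟩
    have heq := h.eq_of_mem p hp x hx y hy
    exact le_antisymm (not_lt.1 fun hlt => heq.not_gt ((hfg y hys x hxs).2 hlt))
      (not_lt.1 fun hlt => heq.not_lt ((hfg x hxs y hys).2 hlt))
  pairwise_lt := h.pairwise_lt.imp_of_mem fun hp hq hlt x hx y hy =>
    (hfg x ((h.mem_iff x).2 ⟨_, hp, hx⟩) y ((h.mem_iff y).2 ⟨_, hq, hy⟩)).1 (hlt x hx y hy)

theorem congr (h : IsLevelSeq f s η) (hfg : Set.EqOn f g s) : IsLevelSeq g s η :=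
  h.congr_of_lt_iff fun x hx y hy => by rw [hfg hx, hfg hy]

theorem exists_append_cons (h : IsLevelSeq f s η) {z : α} (hz : z ∈ s) :
    ∃ L p R, η = L ++ p :: R ∧ z ∈ p := by
  obtain ⟨p, hp, hzp⟩ := (h.mem_iff z).1 hz
  obtain ⟨L, R, rfl⟩ := List.append_of_mem hp
  exact ⟨L, p, R, rfl, hzp⟩

variable {L R : List (Finset α)} {p r : Finset α} {z : α}

theorem lt_of_append_cons (h : IsLevelSeq f s (L ++ p :: R)) (hz : z ∈ p) :
    (∀ q ∈ L, ∀ x ∈ q, f x < f z) ∧ ∀ q ∈ R, ∀ x ∈ q, f z < f x := by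
  obtain ⟨-, hpR, hLp⟩ := List.pairwise_append.1 h.pairwise_lt
  exact ⟨fun q hq x hx => hLp q hq p List.mem_cons_self x hx z hz,
    fun q hq x hx => (List.pairwise_cons.1 hpR).1 q hq z hz x hx⟩

theorem notMem_of_append_cons (h : IsLevelSeq f s (L ++ p :: R)) (hz : z ∈ p) :
    ∀ q ∈ L, z ∉ q :=
  fun q hq hzq => ((h.lt_of_append_cons hz).1 q hq z hzq).false

theorem insert_append (h : IsLevelSeq f s (L ++ R)) (hL : ∀ q ∈ L, ∀ x ∈ q, f x < f z)
    (hR : ∀ q ∈ R, ∀ x ∈ q, f z < f x) : IsLevelSeq f (insert z s) (L ++ {z} :: R) where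
  nonempty := by grind [h.nonempty, Finset.singleton_nonempty]
  mem_iff x := by
    simp [h.mem_iff x, or_and_right, exists_or, or_left_comm]
  eq_of_mem q hq x hx y hy := by
    simp only [List.mem_append, List.mem_cons] at hq
    rcases hq with hq | rfl | hq
    · exact h.eq_of_mem q (List.mem_append_left R hq) x hx y hy
    · rw [Finset.mem_singleton.1 hx, Finset.mem_singleton.1 hy]
    · exact h.eq_of_mem q (List.mem_append_right L hq) x hx y hy
  pairwise_lt := by
    have := h.pairwise_lt
    grind [List.pairwise_cons]

variable [DecidableEq α]

theorem findIdx_spec (h : IsLevelSeq f s η) {x : α} (hx : x ∈ s) :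
    ∃ hlt : η.findIdx (fun p => decide (x ∈ p)) < η.length,
      x ∈ η[η.findIdx fun p => decide (x ∈ p)] := by
  have hlt : η.findIdx (fun p => decide (x ∈ p)) < η.length := by
    simpa [List.findIdx_lt_length] using (h.mem_iff x).1 hx
  exact ⟨hlt, of_decide_eq_true (List.findIdx_getElem (p := fun p => decide (x ∈ p)) (w := hlt))⟩

theorem findIdx_lt_findIdx_iff (h : IsLevelSeq f s η) {x y : α} (hx : x ∈ s) (hy : y ∈ s) :
    η.findIdx (fun p => decide (x ∈ p)) < η.findIdx (fun p => decide (y ∈ p)) ↔ f x < f y := by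
  obtain ⟨_, hx⟩ := h.findIdx_spec hx
  obtain ⟨_, hy⟩ := h.findIdx_spec hy
  exact (h.getElem_lt_iff hx hy).symm

theorem findIdx_eq_findIdx_iff (h : IsLevelSeq f s η) {x y : α} (hx : x ∈ s) (hy : y ∈ s) :
    η.findIdx (fun p => decide (x ∈ p)) = η.findIdx (fun p => decide (y ∈ p)) ↔ f x = f y := by
  simp only [eq_iff_le_not_lt, ← not_lt, h.findIdx_lt_findIdx_iff hx hy,
    h.findIdx_lt_findIdx_iff hy hx]

theorem sdiff (h : IsLevelSeq f s η) (r : Finset α) :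
    IsLevelSeq f (s \ r) ((η.map (· \ r)).filter (· ≠ ∅)) where
  nonempty p hp := Finset.nonempty_iff_ne_empty.2 (of_decide_eq_true (List.mem_filter.1 hp).2)
  mem_iff x := by
    simp only [Set.mem_sdiff, h.mem_iff, List.mem_filter, List.mem_map, Finset.mem_coe]
    grind
  eq_of_mem p hp x hx y hy := by
    obtain ⟨q, hq, rfl⟩ := List.mem_map.1 (List.mem_filter.1 hp).1
    exact h.eq_of_mem q hq x (Finset.sdiff_subset hx) y (Finset.sdiff_subset hy)
  pairwise_lt := by
    refine (List.pairwise_map.2 (h.pairwise_lt.imp ?_)).filter _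
    exact fun hlt x hx y hy => hlt x (Finset.sdiff_subset hx) y (Finset.sdiff_subset hy)

theorem erase_append_cons (h : IsLevelSeq f s (L ++ p :: R)) (hz : z ∈ p) :
    IsLevelSeq f (s \ {z}) (L ++ (if p = {z} then R else (p \ {z}) :: R)) := by
  obtain ⟨hL, hR⟩ := h.lt_of_append_cons hz
  have hne : ∀ q, q ∈ L ∨ q ∈ R → q ≠ ∅ := fun q hq =>
    (h.nonempty q (by grind)).ne_empty
  have hsdiff := h.sdiff {z}
  rw [List.map_append, List.map_cons, List.filter_append,
    map_sdiff_singleton_eq_self fun q hq hzq => (hL q hq z hzq).false,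
    map_sdiff_singleton_eq_self fun q hq hzq => (hR q hq z hzq).false,
    List.filter_eq_self.2 (by simpa using fun q hq => hne q (.inl hq)), List.filter_cons,
    List.filter_eq_self.2 (by simpa using fun q hq => hne q (.inr hq)),
    Finset.coe_singleton] at hsdiff
  have hempty : p \ {z} = ∅ ↔ p = {z} := by
    rw [Finset.sdiff_eq_empty_iff_subset, Finset.subset_singleton_iff]
    exact or_iff_right (Finset.ne_empty_of_mem hz)
  simpa [hempty, ite_not] using hsdiff

theorem union_append_cons (h : IsLevelSeq f s (L ++ p :: R))
    (hr : ∀ x ∈ p, ∀ y ∈ r, f x = f y) : IsLevelSeq f (s ∪ r) (L ++ (p ∪ r) :: R) where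
  nonempty := by grind [h.nonempty, Finset.Nonempty.inl]
  mem_iff x := by
    simp only [Set.mem_union, h.mem_iff x, Finset.mem_coe, List.mem_append, List.mem_cons,
      or_and_right, exists_or, exists_eq_left, Finset.mem_union]
    rw [or_assoc, or_right_comm]
  eq_of_mem q hq x hx y hy := by
    obtain ⟨z, hz⟩ := h.nonempty p (by simp)
    simp only [List.mem_append, List.mem_cons] at hq
    rcases hq with hq | rfl | hq
    · exact h.eq_of_mem q (List.mem_append_left _ hq) x hx y hy
    · have level_z : ∀ x ∈ p ∪ r, f x = f z := fun x hx => (Finset.mem_union.1 hx).elim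
        (fun hx => h.eq_of_mem p (by simp) x hx z hz) fun hx => (hr z hz x hx).symm
      exact (level_z x hx).trans (level_z y hy).symm
    · exact h.eq_of_mem q (by simp [hq]) x hx y hy
  pairwise_lt := by
    obtain ⟨x, hx⟩ := h.nonempty p (by simp)
    have := h.pairwise_lt
    grind [List.pairwise_cons]

theorem move_append_cons (h : IsLevelSeq f s (L ++ p :: R)) (hz : z ∈ p) (hzr : z ∉ r)
    (hrs : (r : Set α) ⊆ s) :
    IsLevelSeq (fun x => if x ∈ r then f z else f x) s
      ((L.map (· \ r) ++ (p ∪ r) :: R.map (· \ r)).filter (· ≠ ∅)) := by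
  have hp : p \ r ≠ ∅ := Finset.ne_empty_of_mem (Finset.mem_sdiff.2 ⟨hz, hzr⟩)
  have hpr : p ∪ r ≠ ∅ := Finset.ne_empty_of_mem (Finset.mem_union_left r hz)
  have hsdiff := (h.sdiff r).congr (g := fun x => if x ∈ r then f z else f x)
    fun x hx => (if_neg hx.2).symm
  simp only [List.map_append, List.map_cons, List.filter_append, List.filter_cons, hp, ne_eq,
    not_false_eq_true, decide_true, if_true] at hsdiff
  have hmove := hsdiff.union_append_cons (r := r) fun x hx y hy => by
    obtain ⟨hxp, hxr⟩ := Finset.mem_sdiff.1 hx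
    simpa [hxr, hy] using h.eq_of_mem p (by simp) x hxp z hz
  rw [Finset.sdiff_union_self_eq_union, Set.sdiff_union_of_subset hrs] at hmove
  simpa [List.filter_cons, hpr] using hmove

end IsLevelSeq
end LevelSeq

section Fract

variable {R : Type*} [CommRing R] [LinearOrder R] [IsStrictOrderedRing R] [FloorRing R] {x y : R}

theorem floor_sub_eq_ite (hx₀ : 0 ≤ x) (hx₁ : x < 1) (hy₀ : 0 ≤ y) (hy₁ : y ≤ 1) :
    ⌊x - y⌋ = if x < y then -1 else 0 := by
  split_ifs with hxy
  · rw [Int.floor_eq_iff]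
    push_cast
    exact ⟨by linarith, by linarith⟩
  · exact Int.floor_eq_zero_iff.2 ⟨by linarith, by linarith⟩

theorem fract_sub_eq_ite (hx₀ : 0 ≤ x) (hx₁ : x < 1) (hy₀ : 0 ≤ y) (hy₁ : y ≤ 1) :
    Int.fract (x - y) = x - y + if x < y then 1 else 0 := by
  rw [Int.fract, floor_sub_eq_ite hx₀ hx₁ hy₀ hy₁]
  split_ifs <;> simp

theorem sub_lt_intCast_iff {d : ℤ} :
    x - y < d ↔ ⌊x⌋ - ⌊y⌋ < d ∨ ⌊x⌋ - ⌊y⌋ = d ∧ Int.fract x < Int.fract y := by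
  have hfloor : (⌊x⌋ - ⌊y⌋ : R) = ((⌊x⌋ - ⌊y⌋ : ℤ) : R) := (Int.cast_sub _ _).symm
  have hx := Int.floor_add_fract x
  have hy := Int.floor_add_fract y
  have hx₀ := Int.fract_nonneg x
  have hy₁ := Int.fract_lt_one y
  have hx₁ := Int.fract_lt_one x
  have hy₀ := Int.fract_nonneg y
  rcases lt_trichotomy (⌊x⌋ - ⌊y⌋) d with h | h | h
  · have : ((⌊x⌋ - ⌊y⌋ : ℤ) : R) + 1 ≤ d := by exact_mod_cast h
    exact iff_of_true (by linarith) (.inl h)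
  · rw [h] at hfloor
    simp only [h, lt_irrefl, true_and, false_or]
    constructor <;> intro <;> linarith
  · have : (d : R) + 1 ≤ ((⌊x⌋ - ⌊y⌋ : ℤ) : R) := by exact_mod_cast h
    refine iff_of_false (by linarith) ?_
    omega

theorem sub_le_intCast_iff {d : ℤ} :
    x - y ≤ d ↔ ⌊x⌋ - ⌊y⌋ < d ∨ ⌊x⌋ - ⌊y⌋ = d ∧ Int.fract x ≤ Int.fract y := by
  have hswap : x - y ≤ d ↔ ¬ y - x < ((-d : ℤ) : R) := by
    rw [not_lt, Int.cast_neg, neg_le, neg_sub]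
  rw [hswap, sub_lt_intCast_iff, ← not_lt (b := Int.fract x)]
  grind

end Fract

/-- The element `0¹` of `K⁰ ∪ K¹`, whose position in a pattern is the now-position. -/
local notation "now" => ((0 : Fin (_ + 1)), true)

section PairFract

variable {k : ℕ} {v₀ v : Val k} {δ : ℝ} {j : Fin (k + 1)} {x : Fin (k + 1) × Bool}

theorem shift_zero (v : Val k) : shift v 0 = v := funext fun j => add_zero (v j)

theorem shift_shift (v : Val k) (δ ε : ℝ) : shift (shift v δ) ε = shift v (δ + ε) :=
  funext fun j => add_assoc (v j) δ ε

theorem relFract_zero (v : Val k) : relFract v 0 = Int.fract (-v 0) := by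
  rw [relFract, if_pos rfl, Int.fract_eq_fract]
  exact ⟨1 + ⌊v 0⌋, by rw [Int.fract]; push_cast; ring⟩

theorem relFract_of_ne_zero (v : Val k) (hj : j ≠ 0) : relFract v j = Int.fract (v j - v 0) := by
  have hzero := relFract_zero v
  rw [relFract, if_pos rfl] at hzero
  rw [relFract, if_neg hj, hzero, Int.fract_eq_fract]
  exact ⟨-⌊v j⌋ - ⌊-v 0⌋, by rw [Int.fract, Int.fract]; push_cast; ring⟩

theorem relFract_nonneg (v : Val k) (j : Fin (k + 1)) : 0 ≤ relFract v j := by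
  rw [relFract]; split_ifs <;> exact Int.fract_nonneg _

theorem relFract_lt_one (v : Val k) (j : Fin (k + 1)) : relFract v j < 1 := by
  rw [relFract]; split_ifs <;> exact Int.fract_lt_one _

/-- The relative fractional parts of a pair of valuations as a single function on `K⁰ ∪ K¹`:
`pairFract v₀ v₁ (i, b)` is `fract(rel(v_b))(i)`, and the pattern of the pair lists its level
sets. -/
noncomputable def pairFract (v₀ v₁ : Val k) (x : Fin (k + 1) × Bool) : ℝ :=
  relFract (bval v₀ v₁ x.2) x.1

theorem pairFract_nonneg (v₀ v : Val k) (x) : 0 ≤ pairFract v₀ v x := relFract_nonneg _ _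

theorem pairFract_lt_one (v₀ v : Val k) (x) : pairFract v₀ v x < 1 := relFract_lt_one _ _

theorem pairFract_zero_false (h₀ : Initial v₀) : pairFract v₀ v (0, false) = 0 := by
  have h₀ : v₀ 0 = 0 := h₀
  simp only [pairFract, bval, relFract_zero, h₀, neg_zero, Int.fract_zero]

theorem pairFract_now (v₀ v : Val k) : pairFract v₀ v now = Int.fract (-v 0) := relFract_zero v

theorem pairFract_shift (δ : ℝ) (hx : x ≠ now) :
    pairFract v₀ (shift v δ) x = pairFract v₀ v x := by
  obtain ⟨i, _ | _⟩ := x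
  · rfl
  · have hi : i ≠ 0 := by rintro rfl; exact hx rfl
    simp only [pairFract, bval, relFract_of_ne_zero _ hi, shift, add_sub_add_right_eq_sub]

theorem pairFract_resetVal {r : Finset (Fin (k + 1))} (hr : 0 ∉ r) :
    pairFract v₀ (resetVal r v) x =
      if x ∈ r.image (·, true) then pairFract v₀ v now else pairFract v₀ v x := by
  obtain ⟨i, _ | _⟩ := x
  · simp [pairFract, bval]
  · rcases eq_or_ne i 0 with rfl | hi
    · simp [pairFract, bval, relFract_zero, resetVal, hr]
    · by_cases hir : i ∈ r <;>
        simp [pairFract, bval, relFract_zero, relFract_of_ne_zero _ hi, resetVal, hr, hir]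

/-- The element of `K⁰ ∪ K¹` at whose level `0¹` sits exactly when clock `j` has an integral
value: `j¹` for `j ∈ K⁺`, and `0⁰` for the clock `0` itself. -/
def tickIdx (j : Fin (k + 1)) : Fin (k + 1) × Bool := (j, decide (j ≠ 0))

theorem tickIdx_ne_now (j : Fin (k + 1)) : tickIdx j ≠ now := by simp [tickIdx]

theorem tickIdx_of_ne_zero (hj : j ≠ 0) : tickIdx j = (j, true) := by simp [tickIdx, hj]

/-- The level of `0¹`, with the level `0` replaced by `1`: clock progress lowers this
value continuously until it reaches `0`. -/
noncomputable def nowHeight (v : Val k) : ℝ := 1 - Int.fract (v 0)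

theorem nowHeight_pos (v : Val k) : 0 < nowHeight v := sub_pos.2 (Int.fract_lt_one _)

theorem nowHeight_le_one (v : Val k) : nowHeight v ≤ 1 := sub_le_self _ (Int.fract_nonneg _)

theorem nowHeight_eq_ite (v₀ v : Val k) :
    nowHeight v = if pairFract v₀ v now = 0 then 1 else pairFract v₀ v now := by
  simp only [pairFract_now, Int.fract_neg_eq_zero]
  split_ifs with h
  · rw [nowHeight, h, sub_zero]
  · rw [nowHeight, Int.fract_neg h]

theorem pairFract_shift_now (hδ₀ : 0 < δ) (hδ : δ ≤ nowHeight v) :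
    pairFract v₀ (shift v δ) now = nowHeight v - δ := by
  have hle := nowHeight_le_one v
  rw [pairFract_now, Int.fract_eq_iff]
  refine ⟨by linarith, by linarith, -⌊v 0⌋ - 1, ?_⟩
  rw [nowHeight, shift, Int.fract]
  push_cast
  ring

theorem nowHeight_shift (hδ₀ : 0 ≤ δ) (hδ : δ < nowHeight v) :
    nowHeight (shift v δ) = nowHeight v - δ := by
  have hfract : Int.fract (v 0 + δ) = Int.fract (v 0) + δ := by
    have hnonneg := Int.fract_nonneg (v 0)
    rw [Int.fract_eq_iff]
    refine ⟨by linarith, by rw [nowHeight] at hδ; linarith, ⌊v 0⌋, ?_⟩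
    rw [Int.fract]
    ring
  rw [nowHeight, shift, hfract, nowHeight]
  ring

theorem exists_eq_intCast_add (h₀ : Initial v₀) (v : Val k) (j : Fin (k + 1)) :
    ∃ n : ℤ, v j = n + (pairFract v₀ v (tickIdx j) - nowHeight v) := by
  rcases eq_or_ne j 0 with rfl | hj
  · refine ⟨⌊v 0⌋ + 1, ?_⟩
    rw [show tickIdx (0 : Fin (k + 1)) = (0, false) from rfl, pairFract_zero_false h₀, nowHeight,
      Int.fract]
    push_cast
    ring
  · refine ⟨⌊v j - v 0⌋ + ⌊v 0⌋ + 1, ?_⟩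
    rw [tickIdx_of_ne_zero hj, pairFract, bval, relFract_of_ne_zero v hj, nowHeight, Int.fract,
      Int.fract]
    push_cast
    ring

theorem fract_apply_eq_ite (h₀ : Initial v₀) (hj : j ≠ 0) :
    Int.fract (v j) = pairFract v₀ v (j, true) - pairFract v₀ v now +
      if pairFract v₀ v (j, true) < pairFract v₀ v now then 1 else 0 := by
  obtain ⟨n, hn⟩ := exists_eq_intCast_add h₀ v j
  rw [tickIdx_of_ne_zero hj] at hn
  have hnonneg := pairFract_nonneg v₀ v (j, true)
  have hlt := pairFract_lt_one v₀ v (j, true)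
  rw [hn, Int.fract_intCast_add,
    fract_sub_eq_ite hnonneg hlt (nowHeight_pos v).le (nowHeight_le_one v), nowHeight_eq_ite v₀ v]
  split_ifs <;> linarith

theorem floor_shift_apply (h₀ : Initial v₀) (hδ₀ : 0 ≤ δ) (hδ : δ ≤ nowHeight v)
    (j : Fin (k + 1)) :
    ⌊shift v δ j⌋ = ⌊v j⌋ + if nowHeight v - δ ≤ pairFract v₀ v (tickIdx j) ∧
      pairFract v₀ v (tickIdx j) < nowHeight v then 1 else 0 := by
  obtain ⟨n, hn⟩ := exists_eq_intCast_add h₀ v j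
  have hnonneg := pairFract_nonneg v₀ v (tickIdx j)
  have hlt := pairFract_lt_one v₀ v (tickIdx j)
  have hle := nowHeight_le_one v
  rw [shift, hn, add_assoc, show ∀ a b : ℝ, a - b + δ = a - (b - δ) by intros; ring,
    Int.floor_intCast_add, Int.floor_intCast_add,
    floor_sub_eq_ite hnonneg hlt (sub_nonneg.2 hδ) (by linarith),
    floor_sub_eq_ite hnonneg hlt (nowHeight_pos v).le hle]
  grind

end PairFract

section Patterns

variable {k : ℕ} {v₀ v : Val k} {η : PatSeq k}

theorem PatternOf.isLevelSeq (h : PatternOf v₀ v η) :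
    IsLevelSeq (pairFract v₀ v) Set.univ η where
  nonempty := h.1.2.1
  mem_iff x := iff_of_true trivial (h.1.2.2.2.2 x)
  eq_of_mem p hp x hx y hy := by
    obtain ⟨m, rfl⟩ := List.get_of_mem hp
    exact (h.2 m m x.2 y.2 x.1 y.1 hx hy).1.2 rfl
  pairwise_lt := List.pairwise_iff_get.2 fun m m' hlt x hx y hy =>
    (h.2 m m' x.2 y.2 x.1 y.1 hx hy).2.2 hlt

theorem IsLevelSeq.pairFract_eq_zero_iff {L R : PatSeq k} {p : Finset (Fin (k + 1) × Bool)}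
    {x : Fin (k + 1) × Bool} (h : IsLevelSeq (pairFract v₀ v) Set.univ (L ++ p :: R))
    (h₀ : Initial v₀) (hx : x ∈ p) : pairFract v₀ v x = 0 ↔ L = [] := by
  constructor
  · intro hzero
    refine List.eq_nil_iff_forall_not_mem.2 fun q hq => ?_
    obtain ⟨y, hy⟩ := h.nonempty q (List.mem_append_left _ hq)
    have hlt := (h.lt_of_append_cons hx).1 q hq y hy
    exact (pairFract_nonneg v₀ v y).not_gt (hzero ▸ hlt)
  · rintro rfl
    have hmin : pairFract v₀ v x ≤ pairFract v₀ v (0, false) := by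
      obtain ⟨q, hq, hzero⟩ := (h.mem_iff (0, false)).1 trivial
      rcases List.mem_cons.1 hq with rfl | hq
      · exact (h.eq_of_mem q List.mem_cons_self x hx _ hzero).le
      · exact ((h.lt_of_append_cons hx).2 q hq _ hzero).le
    rw [pairFract_zero_false h₀] at hmin
    exact hmin.antisymm (pairFract_nonneg v₀ v x)

theorem IsLevelSeq.patternOf (h : IsLevelSeq (pairFract v₀ v) Set.univ η) (h₀ : Initial v₀) :
    PatternOf v₀ v η := by
  refine ⟨⟨?_, h.nonempty, ?_, ?_, fun x => (h.mem_iff x).1 trivial⟩,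
    fun m m' b b' i i' hi hi' => ⟨?_, h.getElem_lt_iff hi hi'⟩⟩
  · simpa [mul_comm] using h.length_le_card
  · exact h.pairwise_lt.imp fun hlt => Finset.disjoint_left.2 fun x hx hx' => (hlt x hx x hx').false
  · obtain ⟨L, p, R, rfl, hp⟩ := h.exists_append_cons (Set.mem_univ ((0 : Fin (k + 1)), false))
    obtain rfl := (h.pairFract_eq_zero_iff h₀ hp).1 (pairFract_zero_false h₀)
    exact hp
  · exact (h.getElem_eq_iff hi hi').trans Fin.ext_iff.symm

theorem PatternOf.posOf_lt_posOf_iff (h : PatternOf v₀ v η) (x y : Fin (k + 1) × Bool) :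
    posOf η x < posOf η y ↔ pairFract v₀ v x < pairFract v₀ v y :=
  h.isLevelSeq.findIdx_lt_findIdx_iff trivial trivial

theorem PatternOf.posOf_eq_posOf_iff (h : PatternOf v₀ v η) (x y : Fin (k + 1) × Bool) :
    posOf η x = posOf η y ↔ pairFract v₀ v x = pairFract v₀ v y :=
  h.isLevelSeq.findIdx_eq_findIdx_iff trivial trivial

end Patterns

section Constraints

variable {k : ℕ} {v₀ v : Val k} {η : PatSeq k} {i j : Fin (k + 1)}

theorem fracGtP_iff (h₀ : Initial v₀) (h : PatternOf v₀ v η) (hi : i ≠ 0) (hj : j ≠ 0) :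
    fracGtP η i j ↔ Int.fract (v j) < Int.fract (v i) := by
  rw [fract_apply_eq_ite h₀ hi, fract_apply_eq_ite h₀ hj]
  simp only [fracGtP, ← not_lt (b := posOf η _), h.posOf_lt_posOf_iff]
  grind [pairFract_nonneg, pairFract_lt_one]

theorem fracEqP_iff (h₀ : Initial v₀) (h : PatternOf v₀ v η) (hi : i ≠ 0) (hj : j ≠ 0) :
    fracEqP η i j ↔ Int.fract (v i) = Int.fract (v j) := by
  rw [fract_apply_eq_ite h₀ hi, fract_apply_eq_ite h₀ hj, fracEqP, h.posOf_eq_posOf_iff]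
  grind [pairFract_nonneg, pairFract_lt_one]

theorem fracZeroP_iff (h₀ : Initial v₀) (h : PatternOf v₀ v η) (hi : i ≠ 0) :
    fracZeroP η i ↔ Int.fract (v i) = 0 := by
  rw [fract_apply_eq_ite h₀ hi, fracZeroP, h.posOf_eq_posOf_iff]
  grind [pairFract_nonneg, pairFract_lt_one]

theorem intPart_cast (hv : IsVal v) (j : Fin (k + 1)) : (intPart v j : ℤ) = ⌊v j⌋ :=
  Int.toNat_of_nonneg (Int.floor_nonneg.2 (hv j))

theorem sat_diff_iff_satP (h₀ : Initial v₀) (hv : IsVal v) (h : PatternOf v₀ v η) (i j : Fin k)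
    (op : CCmp) (d : ℕ) :
    (CC.diff i j op d).sat v ↔ (CC.diff i j op d).satP η (intPart v) := by
  have hi := Fin.succ_ne_zero i
  have hj := Fin.succ_ne_zero j
  have hlt := sub_lt_intCast_iff (x := v i.succ) (y := v j.succ) (d := d)
  have hle := sub_le_intCast_iff (x := v i.succ) (y := v j.succ) (d := d)
  rw [Int.cast_natCast] at hlt hle
  cases op <;>
    simp only [CC.sat, CC.satP, CCmp.evalR, intPart_cast hv, fracGtP_iff h₀ h hi hj,
      fracGtP_iff h₀ h hj hi, fracEqP_iff h₀ h hi hj] <;>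
    grind

theorem sat_single_iff_satP (h₀ : Initial v₀) (hv : IsVal v) (h : PatternOf v₀ v η) (i : Fin k)
    (op : CCmp) (d : ℕ) :
    (CC.single i op d).sat v ↔ (CC.single i op d).satP η (intPart v) := by
  have hlt := sub_lt_intCast_iff (x := v i.succ) (y := 0) (d := d)
  have hle := sub_le_intCast_iff (x := v i.succ) (y := 0) (d := d)
  have hnonneg := Int.fract_nonneg (v i.succ)
  rw [Int.cast_natCast, sub_zero, Int.floor_zero, sub_zero, Int.fract_zero] at hlt hle
  cases op <;>
    simp only [CC.sat, CC.satP, CCmp.evalR, intPart_cast hv,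
      fracZeroP_iff h₀ h (Fin.succ_ne_zero i)] <;>
    grind

theorem sat_iff_satP (h₀ : Initial v₀) (hv : IsVal v) (h : PatternOf v₀ v η) (c : CC k) :
    c.sat v ↔ c.satP η (intPart v) := by
  induction c with
  | diff i j op d => exact sat_diff_iff_satP h₀ hv h i j op d
  | single i op d => exact sat_single_iff_satP h₀ hv h i op d
  | not c ih => exact not_congr ih
  | and c₁ c₂ ih₁ ih₂ => exact and_congr ih₁ ih₂

end Constraints

section NextReset

variable {k : ℕ} {L R : PatSeq k} {p q : Finset (Fin (k + 1) × Bool)} {u : DVal k}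

theorem nowIdx_append_cons (hL : ∀ q ∈ L, now ∉ q) (hp : now ∈ p) :
    nowIdx (L ++ p :: R) = L.length := by
  have hfind : L.findIdx (fun q => decide (now ∈ q)) = L.length :=
    List.findIdx_eq_length_of_false (by simpa using hL)
  simp [nowIdx, List.findIdx_append, hfind, List.findIdx_cons, hp]

theorem getD_nowIdx_append_cons (hL : ∀ q ∈ L, now ∉ q) (hp : now ∈ p) :
    (L ++ p :: R).getD (nowIdx (L ++ p :: R)) ∅ = p := by
  rw [nowIdx_append_cons hL hp, List.getD_append_right _ _ _ _ le_rfl, Nat.sub_self,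
    List.getD_cons_zero]

theorem isMergePat_append_cons (hL : ∀ q ∈ L, now ∉ q) (hp : now ∈ p) :
    IsMergePat (L ++ p :: R) ↔ p = {now} := by
  rw [IsMergePat, getD_nowIdx_append_cons hL hp]

theorem NextPat_merge (hL : ∀ p ∈ L ++ [q], now ∉ p) :
    NextPat ((L ++ [q]) ++ {now} :: R) = L ++ (q ∪ {now}) :: R := by
  have hnow := Finset.mem_singleton_self ((0 : Fin (k + 1)), true)
  have hdrop : ((L ++ [q]) ++ {now} :: R).drop ((L ++ [q]).length + 1) = R := by
    simp only [List.drop_append, List.drop_eq_nil_of_le (Nat.le_succ _)]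
    simp
  rw [NextPat, getD_nowIdx_append_cons hL hnow, if_pos rfl, nowIdx_append_cons hL hnow, hdrop]
  simp

theorem nextD_merge (hL : ∀ p ∈ L ++ [q], now ∉ p) (hq : (0, false) ∈ q ↔ L = [])
    (j : Fin (k + 1)) :
    nextD ((L ++ [q]) ++ {now} :: R) u j = u j + if tickIdx j ∈ q then 1 else 0 := by
  have hnow := Finset.mem_singleton_self ((0 : Fin (k + 1)), true)
  rw [nextD, getD_nowIdx_append_cons hL hnow, if_pos rfl, nowIdx_append_cons hL hnow]
  rcases eq_or_ne j 0 with rfl | hj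
  · simp [tickIdx, hq, add_ite]
  · simp [tickIdx, hj, add_ite]

theorem NextPat_split_cons (hp : now ∈ p) (hne : p ≠ {now}) :
    NextPat (p :: R) = (p \ {now}) :: (R ++ [{now}]) := by
  have hidx : nowIdx (p :: R) = 0 := nowIdx_append_cons (L := []) (by simp) hp
  simp [NextPat, hidx, hne]

theorem NextPat_split (hL : ∀ q ∈ L, now ∉ q) (hnil : L ≠ []) (hp : now ∈ p)
    (hne : p ≠ {now}) : NextPat (L ++ p :: R) = L ++ {now} :: (p \ {now}) :: R := by
  rw [NextPat, getD_nowIdx_append_cons hL hp, if_neg hne, nowIdx_append_cons hL hp,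
    if_neg (mt List.length_eq_zero_iff.1 hnil)]
  simp [List.drop_append]

theorem nextD_split {η : PatSeq k} (hη : ¬ IsMergePat η) : nextD η u = u := if_neg hη

theorem ResetPat_append_cons (hL : ∀ q ∈ L, now ∉ q) (hp : now ∈ p) (r : Finset (Fin (k + 1))) :
    ResetPat r (L ++ p :: R) = (L.map (· \ r.image (·, true)) ++ (p ∪ r.image (·, true)) ::
      R.map (· \ r.image (·, true))).filter (· ≠ ∅) := by
  simp only [ResetPat, nowIdx_append_cons hL hp, List.mapIdx_append, List.mapIdx_cons]
  congr 2
  · exact List.ext_getElem (by simp) fun n hn _ => by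
      simp [(by simpa using hn : n < L.length).ne]
  · simp only [zero_add, if_true]
    congr 1
    exact List.ext_getElem (by simp) fun n _ _ => by simp

end NextReset

section Gap

variable {k : ℕ} {v₀ v : Val k} {d ε : ℝ} {L R : PatSeq k} {p : Finset (Fin (k + 1) × Bool)}

/-- `d` is the time after which `0¹`, moving down from its height `nowHeight v`, meets the next
level of the pattern of `(v₀, v)`. -/
structure IsGap (v₀ v : Val k) (d : ℝ) : Prop where
  pos : 0 < d
  le_sub_or_le : ∀ x ≠ now, pairFract v₀ v x ≤ nowHeight v - d ∨ nowHeight v ≤ pairFract v₀ v x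
  exists_eq : ∃ x ≠ now, pairFract v₀ v x = nowHeight v - d

theorem exists_isGap (h₀ : Initial v₀) (v : Val k) : ∃ d, IsGap v₀ v d := by
  let below : Finset (Fin (k + 1) × Bool) :=
    {x | x ≠ now ∧ pairFract v₀ v x < nowHeight v}
  have hzero : (0, false) ∈ below := by
    simpa [below, pairFract_zero_false h₀] using nowHeight_pos v
  obtain ⟨y, hy, hmax⟩ := below.exists_max_image (pairFract v₀ v) ⟨_, hzero⟩
  obtain ⟨hynow, hylt⟩ := (Finset.mem_filter.1 hy).2
  refine ⟨nowHeight v - pairFract v₀ v y, sub_pos.2 hylt, fun x hx => ?_, y, hynow, by ring⟩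
  rw [sub_sub_cancel, or_iff_not_imp_right, not_le]
  exact fun hlt => hmax x (Finset.mem_filter.2 ⟨Finset.mem_univ x, hx, hlt⟩)

namespace IsGap

theorem le_nowHeight (h : IsGap v₀ v d) : d ≤ nowHeight v := by
  obtain ⟨x, -, hx⟩ := h.exists_eq
  exact sub_nonneg.1 (hx ▸ pairFract_nonneg v₀ v x)

theorem isGap_shift (h : IsGap v₀ v d) (hε₀ : 0 ≤ ε) (hε : ε < d) :
    IsGap v₀ (shift v ε) (d - ε) := by
  have hheight := nowHeight_shift hε₀ (hε.trans_le h.le_nowHeight)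
  have hsub : nowHeight v - ε - (d - ε) = nowHeight v - d := by ring
  refine ⟨sub_pos.2 hε, fun x hx => ?_, ?_⟩
  · rw [pairFract_shift ε hx, hheight, hsub]
    exact (h.le_sub_or_le x hx).imp_right (sub_le_self _ hε₀).trans
  · obtain ⟨x, hx, heq⟩ := h.exists_eq
    exact ⟨x, hx, by rw [pairFract_shift ε hx, hheight, hsub, heq]⟩

theorem intPart_shift_of_lt (h : IsGap v₀ v d) (h₀ : Initial v₀) (hε₀ : 0 ≤ ε) (hε : ε < d) :
    intPart (shift v ε) = intPart v := by
  funext j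
  have hgap := h.le_sub_or_le _ (tickIdx_ne_now j)
  rw [intPart, intPart, floor_shift_apply h₀ hε₀ (hε.le.trans h.le_nowHeight), if_neg, add_zero]
  rintro ⟨hle, hlt⟩
  rcases hgap with hgap | hgap <;> linarith

theorem intPart_shift (h : IsGap v₀ v d) (h₀ : Initial v₀) (hv : IsVal v) (j : Fin (k + 1)) :
    intPart (shift v d) j =
      intPart v j + if pairFract v₀ v (tickIdx j) = nowHeight v - d then 1 else 0 := by
  have hiff : (nowHeight v - d ≤ pairFract v₀ v (tickIdx j) ∧
      pairFract v₀ v (tickIdx j) < nowHeight v) ↔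
        pairFract v₀ v (tickIdx j) = nowHeight v - d := by
    have hgap := h.le_sub_or_le _ (tickIdx_ne_now j)
    have hpos := h.pos
    grind
  have hfloor := Int.floor_nonneg.2 (hv j)
  rw [intPart, floor_shift_apply h₀ h.pos.le h.le_nowHeight, intPart]
  simp only [hiff]
  split_ifs <;> omega

theorem isLevelSeq_shift_of_lt (h : IsGap v₀ v d) (hε₀ : 0 < ε) (hε : ε < d)
    (hη : IsLevelSeq (pairFract v₀ v) (Set.univ \ {now}) (L ++ R))
    (hL : ∀ q ∈ L, ∀ x ∈ q, pairFract v₀ v x < nowHeight v)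
    (hR : ∀ q ∈ R, ∀ x ∈ q, nowHeight v ≤ pairFract v₀ v x) :
    IsLevelSeq (pairFract v₀ (shift v ε)) Set.univ (L ++ {now} :: R) := by
  have hne : ∀ q ∈ L ++ R, ∀ x ∈ q, x ≠ now := fun q hq x hx => ((hη.mem_iff x).2 ⟨q, hq, hx⟩).2
  have hnow := pairFract_shift_now (v₀ := v₀) hε₀ (hε.le.trans h.le_nowHeight)
  rw [← Set.insert_sdiff_self_of_mem (Set.mem_univ now)]
  refine (hη.congr fun x hx => (pairFract_shift ε hx.2).symm).insert_append ?_ ?_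
  · intro q hq x hx
    have hxnow := hne q (List.mem_append_left R hq) x hx
    rw [pairFract_shift ε hxnow, hnow]
    have hle := (h.le_sub_or_le x hxnow).resolve_right (hL q hq x hx).not_ge
    linarith
  · intro q hq x hx
    rw [pairFract_shift ε (hne q (List.mem_append_right L hq) x hx), hnow]
    linarith [hR q hq x hx]

theorem eq_sub_of_mem_last (h : IsGap v₀ v d)
    (hη : IsLevelSeq (pairFract v₀ v) (Set.univ \ {now}) (L ++ p :: R))
    (hp : ∀ x ∈ p, pairFract v₀ v x < nowHeight v)
    (hR : ∀ q ∈ R, ∀ x ∈ q, nowHeight v ≤ pairFract v₀ v x) :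
    ∀ x ∈ p, pairFract v₀ v x = nowHeight v - d := by
  intro x hx
  have hxnow : x ≠ now := ((hη.mem_iff x).2 ⟨p, by simp, hx⟩).2
  have hle := (h.le_sub_or_le x hxnow).resolve_right (hp x hx).not_ge
  have hpos := h.pos
  obtain ⟨y, hy, hyd⟩ := h.exists_eq
  obtain ⟨q, hq, hyq⟩ := (hη.mem_iff y).1 ⟨trivial, hy⟩
  rcases List.mem_append.1 hq with hqL | hqR
  · linarith [(hη.lt_of_append_cons hx).1 q hqL y hyq]
  rcases List.mem_cons.1 hqR with rfl | hqR
  · rw [← hyd, hη.eq_of_mem q hq x hx y hyq]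
  · linarith [hR q hqR y hyq]

theorem isLevelSeq_shift (h : IsGap v₀ v d)
    (hη : IsLevelSeq (pairFract v₀ v) (Set.univ \ {now}) (L ++ p :: R))
    (hp : ∀ x ∈ p, pairFract v₀ v x = nowHeight v - d) :
    IsLevelSeq (pairFract v₀ (shift v d)) Set.univ (L ++ (p ∪ {now}) :: R) := by
  have huniv : (Set.univ : Set (Fin (k + 1) × Bool)) =
      Set.univ \ {now} ∪ (({now} : Finset (Fin (k + 1) × Bool)) : Set _) := by simp
  rw [huniv]
  refine (hη.congr fun x hx => (pairFract_shift d hx.2).symm).union_append_cons ?_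
  intro x hx y hy
  have hxnow : x ≠ now := ((hη.mem_iff x).2 ⟨p, by simp, hx⟩).2
  rw [Finset.mem_singleton.1 hy, pairFract_shift d hxnow, hp x hx,
    pairFract_shift_now h.pos h.le_nowHeight]

end IsGap

end Gap

section Abstracts

variable {k : ℕ} {v₀ v : Val k} {η : PatSeq k} {u : DVal k} {d ε : ℝ}

/-- The simulation relation between the automaton and its pattern graph, for a run started in
the initial valuation `v₀`: the valuation `v` is abstracted to the pattern of `(v₀, v)` and the
integral parts of `v`. -/
structure Abstracts (v₀ v : Val k) (η : PatSeq k) (u : DVal k) : Prop where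
  initial : Initial v₀
  isVal : IsVal v
  patternOf : PatternOf v₀ v η
  intPart_eq : intPart v = u

namespace Abstracts

theorem sat_iff (h : Abstracts v₀ v η u) (c : CC k) : c.sat v ↔ c.satP η u :=
  h.intPart_eq ▸ sat_iff_satP h.initial h.isVal h.patternOf c

theorem exists_append_cons_now (h : Abstracts v₀ v η u) :
    ∃ L p R, η = L ++ p :: R ∧ now ∈ p ∧ (∀ q ∈ L, now ∉ q) ∧ (IsMergePat η ↔ p = {now}) := by
  have hη := h.patternOf.isLevelSeq
  obtain ⟨L, p, R, rfl, hp⟩ := hη.exists_append_cons (Set.mem_univ now)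
  have hL := hη.notMem_of_append_cons hp
  exact ⟨L, p, R, rfl, hp, hL, isMergePat_append_cons hL hp⟩

theorem reset (h : Abstracts v₀ v η u) {r : Finset (Fin (k + 1))} (hr : 0 ∉ r) :
    Abstracts v₀ (resetVal r v) (ResetPat r η) (resetD r u) where
  initial := h.initial
  isVal j := by
    rw [resetVal]
    split_ifs
    exacts [le_rfl, h.isVal j]
  patternOf := by
    have hη := h.patternOf.isLevelSeq
    obtain ⟨L, p, R, rfl, hp, hL, -⟩ := h.exists_append_cons_now
    have hnow : now ∉ r.image (·, true) := by simpa using hr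
    rw [ResetPat_append_cons hL hp]
    exact ((hη.move_append_cons hp hnow (Set.subset_univ _)).congr fun x _ =>
      (pairFract_resetVal hr).symm).patternOf h.initial
  intPart_eq := by
    funext j
    simp only [intPart, resetVal, resetD, ← h.intPart_eq]
    split_ifs <;> simp

theorem nowHeight_eq {L R : PatSeq k} {p : Finset (Fin (k + 1) × Bool)}
    (h : Abstracts v₀ v (L ++ p :: R) u) (hp : now ∈ p) :
    nowHeight v = if L = [] then 1 else pairFract v₀ v now := by
  simp only [nowHeight_eq_ite v₀ v, h.patternOf.isLevelSeq.pairFract_eq_zero_iff h.initial hp]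

theorem exists_append_of_isMergePat (h : Abstracts v₀ v η u) (hmerge : IsMergePat η) :
    ∃ L p R, η = (L ++ [p]) ++ {now} :: R ∧
      IsLevelSeq (pairFract v₀ v) (Set.univ \ {now}) ((L ++ [p]) ++ R) ∧
      (∀ q ∈ L ++ [p], ∀ x ∈ q, pairFract v₀ v x < nowHeight v) ∧
      ∀ q ∈ R, ∀ x ∈ q, nowHeight v ≤ pairFract v₀ v x := by
  have hη := h.patternOf.isLevelSeq
  obtain ⟨L, p, R, rfl, hp, -, hiff⟩ := h.exists_append_cons_now
  obtain rfl := hiff.1 hmerge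
  have hne : L ≠ [] := by
    rintro rfl
    simpa using h.patternOf.1.2.2.2.1
  have hheight := h.nowHeight_eq hp
  rw [if_neg hne] at hheight
  obtain ⟨hL, hR⟩ := hη.lt_of_append_cons hp
  have herase := hη.erase_append_cons hp
  rw [if_pos rfl] at herase
  obtain ⟨L, p, rfl⟩ := L.eq_nil_or_concat'.resolve_left hne
  rw [hheight]
  exact ⟨L, p, R, rfl, herase, hL, fun q hq x hx => (hR q hq x hx).le⟩

theorem exists_nextPat_eq_append (h : Abstracts v₀ v η u) (hsplit : ¬ IsMergePat η) :
    ∃ L R, NextPat η = L ++ {now} :: R ∧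
      IsLevelSeq (pairFract v₀ v) (Set.univ \ {now}) (L ++ R) ∧
      (∀ q ∈ L, ∀ x ∈ q, pairFract v₀ v x < nowHeight v) ∧
      ∀ q ∈ R, ∀ x ∈ q, nowHeight v ≤ pairFract v₀ v x := by
  have hη := h.patternOf.isLevelSeq
  obtain ⟨L, p, R, rfl, hp, hnow, hiff⟩ := h.exists_append_cons_now
  have hne := mt hiff.2 hsplit
  have hheight := h.nowHeight_eq hp
  obtain ⟨hL, hR⟩ := hη.lt_of_append_cons hp
  have herase := hη.erase_append_cons hp
  rw [if_neg hne] at herase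
  by_cases hnil : L = []
  · subst hnil
    rw [if_pos rfl] at hheight
    refine ⟨(p \ {now}) :: R, [], NextPat_split_cons hp hne, by simpa using herase, ?_, by simp⟩
    exact fun q _ x _ => hheight ▸ pairFract_lt_one v₀ v x
  · rw [if_neg hnil] at hheight
    rw [hheight]
    refine ⟨L, (p \ {now}) :: R, NextPat_split hnow hnil hp hne, herase, hL, ?_⟩
    rintro q (_ | ⟨_, hq⟩) x hx
    · exact (hη.eq_of_mem p (by simp) now hp x (Finset.mem_sdiff.1 hx).1).le
    · exact (hR q hq x hx).le

theorem shift_of_isMergePat (h : Abstracts v₀ v η u) (hmerge : IsMergePat η)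
    (hgap : IsGap v₀ v d) (hε₀ : 0 ≤ ε) (hε : ε < d) : Abstracts v₀ (shift v ε) η u where
  initial := h.initial
  isVal j := add_nonneg (h.isVal j) hε₀
  patternOf := by
    rcases hε₀.eq_or_lt with rfl | hε₀
    · rw [shift_zero]
      exact h.patternOf
    obtain ⟨L, p, R, rfl, hη, hL, hR⟩ := h.exists_append_of_isMergePat hmerge
    exact (hgap.isLevelSeq_shift_of_lt hε₀ hε hη hL hR).patternOf h.initial
  intPart_eq := (hgap.intPart_shift_of_lt h.initial hε₀ hε).trans h.intPart_eq

theorem shift_gap_of_isMergePat (h : Abstracts v₀ v η u) (hmerge : IsMergePat η)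
    (hgap : IsGap v₀ v d) : Abstracts v₀ (shift v d) (NextPat η) (nextD η u) := by
  have hfull := h.patternOf.isLevelSeq
  obtain ⟨L, p, R, rfl, hη, hL, hR⟩ := h.exists_append_of_isMergePat hmerge
  have hnow := hfull.notMem_of_append_cons (Finset.mem_singleton_self _)
  rw [List.append_assoc, List.singleton_append] at hfull hη
  obtain ⟨x, hx⟩ := hfull.nonempty p (by simp)
  have hp := hgap.eq_sub_of_mem_last hη (hL p (by simp)) hR
  have hzero : (0, false) ∈ p ↔ L = [] := by
    rw [hη.mem_iff_eq (by simp) hx (by simp), pairFract_zero_false h.initial, eq_comm,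
      hfull.pairFract_eq_zero_iff h.initial hx]
  refine ⟨h.initial, fun j => add_nonneg (h.isVal j) hgap.pos.le, ?_, funext fun j => ?_⟩
  · rw [NextPat_merge hnow]
    exact (hgap.isLevelSeq_shift hη hp).patternOf h.initial
  · have htick : tickIdx j ∈ p ↔ pairFract v₀ v (tickIdx j) = nowHeight v - d := by
      rw [hη.mem_iff_eq (by simp) hx ⟨trivial, tickIdx_ne_now j⟩, hp x hx]
    rw [hgap.intPart_shift h.initial h.isVal, nextD_merge hnow hzero, h.intPart_eq]
    simp only [htick]

theorem shift_of_not_isMergePat (h : Abstracts v₀ v η u) (hsplit : ¬ IsMergePat η)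
    (hgap : IsGap v₀ v d) (hε₀ : 0 < ε) (hε : ε < d) :
    Abstracts v₀ (shift v ε) (NextPat η) (nextD η u) ∧ IsMergePat (NextPat η) := by
  obtain ⟨L, R, hnext, hη, hL, hR⟩ := h.exists_nextPat_eq_append hsplit
  have hlevel := hgap.isLevelSeq_shift_of_lt hε₀ hε hη hL hR
  have hnow := Finset.mem_singleton_self ((0 : Fin (k + 1)), true)
  rw [hnext, nextD_split hsplit]
  exact ⟨⟨h.initial, fun j => add_nonneg (h.isVal j) hε₀.le, hlevel.patternOf h.initial,
    (hgap.intPart_shift_of_lt h.initial hε₀.le hε).trans h.intPart_eq⟩,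
    (isMergePat_append_cons (hlevel.notMem_of_append_cons hnow) hnow).2 rfl⟩

end Abstracts

end Abstracts

section Crossings

variable {k : ℕ} {v₀ v : Val k} {d δ : ℝ}

/-- The number of times that `0¹` has met another level, up to a constant depending only on
the other levels. It grows with time, and strictly so over a gap, hence only finitely many gaps
fit into a bounded amount of time. -/
noncomputable def crossings (v₀ v : Val k) : ℕ :=
  ∑ x ∈ Finset.univ.erase now, ⌊pairFract v₀ v x + v 0⌋₊

theorem crossings_shift (v₀ v : Val k) (δ : ℝ) :
    crossings v₀ (shift v δ) = ∑ x ∈ Finset.univ.erase now, ⌊pairFract v₀ v x + v 0 + δ⌋₊ :=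
  Finset.sum_congr rfl fun x hx => by
    rw [pairFract_shift δ (Finset.ne_of_mem_erase hx), shift, add_assoc]

theorem crossings_le_crossings_shift (hδ : 0 ≤ δ) :
    crossings v₀ v ≤ crossings v₀ (shift v δ) := by
  rw [crossings_shift]
  exact Finset.sum_le_sum fun x _ => Nat.floor_mono (le_add_of_nonneg_right hδ)

theorem IsGap.crossings_lt_crossings_shift (h : IsGap v₀ v d) (hv : 0 ≤ v 0) :
    crossings v₀ v < crossings v₀ (shift v d) := by
  rw [crossings_shift]
  obtain ⟨y, hy, heq⟩ := h.exists_eq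
  refine Finset.sum_lt_sum (fun x _ => Nat.floor_mono (le_add_of_nonneg_right h.pos.le))
    ⟨y, Finset.mem_erase.2 ⟨hy, Finset.mem_univ y⟩, ?_⟩
  have hmeet : pairFract v₀ v y + v 0 + d = ((⌊v 0⌋₊ + 1 : ℕ) : ℝ) := by
    rw [heq, nowHeight, ← Int.self_sub_floor, ← natCast_floor_eq_intCast_floor hv]
    push_cast
    ring
  rw [hmeet, Nat.floor_natCast, Nat.floor_lt (add_nonneg (pairFract_nonneg v₀ v y) hv), ← hmeet]
  exact lt_add_of_pos_right _ h.pos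

end Crossings

section Simulation

variable {k : ℕ} {S Γ : Type} {A : PTA k S Γ} {v₀ v : Val k} {η : PatSeq k} {u : DVal k}
  {s : S} {w : List Γ} {d δ : ℝ}

theorem GStep.progress (hη : (A.Inv s).satP η u) (hnext : (A.Inv s).satP (NextPat η) (nextD η u)) :
    GStep A (s, η, u, w) (s, NextPat η, nextD η u, w) :=
  .inl ⟨rfl, rfl, rfl, hη, hnext⟩

theorem GStep.stay (hmerge : IsMergePat η) (hη : (A.Inv s).satP η u) :
    GStep A (s, η, u, w) (s, η, u, w) :=
  .inr (.inl ⟨rfl, hmerge, hη⟩)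

theorem Step.progress (hδ : 0 < δ) (hinv : ∀ δ', 0 ≤ δ' → δ' ≤ δ → (A.Inv s).sat (shift v δ')) :
    Step A (s, v, w) (s, shift v δ, w) :=
  .inl ⟨rfl, rfl, δ, hδ, rfl, hinv⟩

theorem exists_gStep_shift_of_isMergePat (h : Abstracts v₀ v η u) (hmerge : IsMergePat η)
    (hgap : IsGap v₀ v d) (hδ₀ : 0 < δ) (hδ : δ ≤ d) (hv : (A.Inv s).sat v)
    (hvδ : (A.Inv s).sat (shift v δ)) :
    ∃ η' u', Abstracts v₀ (shift v δ) η' u' ∧ GStep A (s, η, u, w) (s, η', u', w) := by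
  rw [h.sat_iff] at hv
  rcases hδ.lt_or_eq with hlt | rfl
  · exact ⟨η, u, h.shift_of_isMergePat hmerge hgap hδ₀.le hlt, .stay hmerge hv⟩
  · have hnext := h.shift_gap_of_isMergePat hmerge hgap
    exact ⟨_, _, hnext, .progress hv ((hnext.sat_iff _).1 hvδ)⟩

theorem exists_gReach_shift_of_le_gap (h : Abstracts v₀ v η u) (hgap : IsGap v₀ v d)
    (hδ₀ : 0 < δ) (hδ : δ ≤ d)
    (hinv : ∀ δ', 0 ≤ δ' → δ' ≤ δ → (A.Inv s).sat (shift v δ')) :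
    ∃ η' u', Abstracts v₀ (shift v δ) η' u' ∧ GReach A (s, η, u, w) (s, η', u', w) := by
  have hv : (A.Inv s).sat v := shift_zero v ▸ hinv 0 le_rfl hδ₀.le
  by_cases hmerge : IsMergePat η
  · obtain ⟨η', u', h', hstep⟩ :=
      exists_gStep_shift_of_isMergePat h hmerge hgap hδ₀ hδ hv (hinv δ hδ₀.le le_rfl)
    exact ⟨η', u', h', .single hstep⟩
  · have hhalf : δ / 2 < d := (half_lt_self hδ₀).trans_le hδ
    obtain ⟨hmid, hmerge'⟩ := h.shift_of_not_isMergePat hmerge hgap (half_pos hδ₀) hhalf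
    have hsat := hinv (δ / 2) (half_pos hδ₀).le (half_le_self hδ₀.le)
    have hend : shift (shift v (δ / 2)) (δ / 2) = shift v δ := by rw [shift_shift, add_halves]
    obtain ⟨η', u', h', hstep⟩ := exists_gStep_shift_of_isMergePat (w := w) hmid hmerge'
      (hgap.isGap_shift (half_pos hδ₀).le hhalf) (half_pos hδ₀) (by linarith) hsat
      (hend ▸ hinv δ hδ₀.le le_rfl)
    exact ⟨η', u', hend ▸ h',
      .tail (.single (.progress ((h.sat_iff _).1 hv) ((hmid.sat_iff _).1 hsat))) hstep⟩

theorem exists_gReach_shift (h : Abstracts v₀ v η u) (hδ₀ : 0 < δ)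
    (hinv : ∀ δ', 0 ≤ δ' → δ' ≤ δ → (A.Inv s).sat (shift v δ')) :
    ∃ η' u', Abstracts v₀ (shift v δ) η' u' ∧ GReach A (s, η, u, w) (s, η', u', w) := by
  induction hn : crossings v₀ (shift v δ) - crossings v₀ v using Nat.strong_induction_on
    generalizing v η u δ with
  | _ n ih =>
    obtain ⟨d, hgap⟩ := exists_isGap h.initial v
    rcases le_or_gt δ d with hδ | hδ
    · exact exists_gReach_shift_of_le_gap h hgap hδ₀ hδ hinv
    · obtain ⟨η₁, u₁, h₁, hreach₁⟩ := exists_gReach_shift_of_le_gap (w := w) h hgap hgap.pos le_rfl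
        fun δ' hδ'₀ hδ' => hinv δ' hδ'₀ (hδ'.trans hδ.le)
      have hend : shift (shift v d) (δ - d) = shift v δ := by rw [shift_shift, add_sub_cancel]
      have hlt := hgap.crossings_lt_crossings_shift (h.isVal 0)
      have hle : crossings v₀ (shift v d) ≤ crossings v₀ (shift v δ) :=
        hend ▸ crossings_le_crossings_shift (sub_pos.2 hδ).le
      obtain ⟨η₂, u₂, h₂, hreach₂⟩ := ih _ (by rw [hend]; omega) h₁ (sub_pos.2 hδ)
        (fun δ' hδ'₀ hδ' => by
          rw [shift_shift]
          exact hinv _ (add_nonneg hgap.pos.le hδ'₀) (by linarith)) rfl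
      exact ⟨η₂, u₂, hend ▸ h₂, hreach₁.trans hreach₂⟩

/-- The extension of `Abstracts v₀` to configurations, relating equal states and stacks. -/
def AbstractsConfig (v₀ : Val k) (c : Config k S Γ) (g : GConfig k S Γ) : Prop :=
  c.1 = g.1 ∧ c.2.2 = g.2.2.2 ∧ Abstracts v₀ c.2.1 g.2.1 g.2.2.1

variable {c c' : Config k S Γ} {g g' : GConfig k S Γ}

theorem Step.exists_gReach (hstep : Step A c c') (h : AbstractsConfig v₀ c g) :
    ∃ g', AbstractsConfig v₀ c' g' ∧ GReach A g g' := by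
  obtain ⟨s, v, w⟩ := c
  obtain ⟨s', v', w'⟩ := c'
  obtain ⟨_, η, u, _⟩ := g
  obtain ⟨rfl, rfl, h⟩ := h
  rcases hstep with ⟨rfl, rfl, δ, hδ, hv', hinv⟩ | ⟨hinv, hcond, hv', hinv', hstack⟩
  · obtain ⟨η', u', h', hreach⟩ := exists_gReach_shift (w := w) h hδ hinv
    exact ⟨(s, η', u', w), ⟨rfl, rfl, hv' ▸ h'⟩, hreach⟩
  · dsimp only at hv'
    subst hv'
    have h' := h.reset (A.hRr s s')
    exact ⟨(s', _, _, w'), ⟨rfl, rfl, h'⟩, .single (.inr (.inr ⟨rfl,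
      ⟨(h.sat_iff _).1 hcond, (h.sat_iff _).1 hinv⟩, (h'.sat_iff _).1 hinv', hstack⟩))⟩

theorem exists_step_shift_stay (h : Abstracts v₀ v η u) (hmerge : IsMergePat η)
    (hη : (A.Inv s).satP η u) :
    ∃ v', Abstracts v₀ v' η u ∧ Step A (s, v, w) (s, v', w) := by
  obtain ⟨d, hgap⟩ := exists_isGap h.initial v
  have hstay : ∀ δ', 0 ≤ δ' → δ' ≤ d / 2 → Abstracts v₀ (shift v δ') η u := fun δ' hδ'₀ hδ' =>
    h.shift_of_isMergePat hmerge hgap hδ'₀ (hδ'.trans_lt (half_lt_self hgap.pos))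
  exact ⟨_, hstay _ (half_pos hgap.pos).le le_rfl, .progress (half_pos hgap.pos)
    fun δ' hδ'₀ hδ' => ((hstay δ' hδ'₀ hδ').sat_iff _).2 hη⟩

theorem exists_step_shift_next (h : Abstracts v₀ v η u) (hη : (A.Inv s).satP η u)
    (hnext : (A.Inv s).satP (NextPat η) (nextD η u)) :
    ∃ v', Abstracts v₀ v' (NextPat η) (nextD η u) ∧ Step A (s, v, w) (s, v', w) := by
  obtain ⟨d, hgap⟩ := exists_isGap h.initial v
  by_cases hmerge : IsMergePat η
  · have h' := h.shift_gap_of_isMergePat hmerge hgap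
    refine ⟨_, h', .progress hgap.pos fun δ' hδ'₀ hδ' => ?_⟩
    rcases hδ'.lt_or_eq with hlt | rfl
    · exact ((h.shift_of_isMergePat hmerge hgap hδ'₀ hlt).sat_iff _).2 hη
    · exact (h'.sat_iff _).2 hnext
  · have hsplit : ∀ δ', 0 < δ' → δ' ≤ d / 2 → Abstracts v₀ (shift v δ') (NextPat η) (nextD η u) :=
      fun δ' hδ'₀ hδ' =>
        (h.shift_of_not_isMergePat hmerge hgap hδ'₀ (hδ'.trans_lt (half_lt_self hgap.pos))).1
    refine ⟨_, hsplit _ (half_pos hgap.pos) le_rfl, .progress (half_pos hgap.pos)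
      fun δ' hδ'₀ hδ' => ?_⟩
    rcases hδ'₀.eq_or_lt with rfl | hpos
    · rw [shift_zero]
      exact (h.sat_iff _).2 hη
    · exact ((hsplit δ' hpos hδ').sat_iff _).2 hnext

theorem GStep.exists_step (hstep : GStep A g g') (h : AbstractsConfig v₀ c g) :
    ∃ c', AbstractsConfig v₀ c' g' ∧ Step A c c' := by
  obtain ⟨s, v, w⟩ := c
  obtain ⟨_, η, u, _⟩ := g
  obtain ⟨s', η', u', w'⟩ := g'
  obtain ⟨rfl, rfl, h⟩ := h
  rcases hstep with ⟨rfl, rfl, hpair, hη, hnext⟩ | ⟨heq, hmerge, hη⟩ |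
    ⟨hpair, ⟨hcond, hinv⟩, hinv', hstack⟩
  · obtain ⟨rfl, rfl⟩ := Prod.mk.inj hpair
    obtain ⟨v', h', hstep⟩ := exists_step_shift_next (w := w) h hη hnext
    exact ⟨(s, v', w), ⟨rfl, rfl, h'⟩, hstep⟩
  · obtain ⟨rfl, rfl, rfl, rfl⟩ := by simpa only [Prod.mk.injEq] using heq
    obtain ⟨v', h', hstep⟩ := exists_step_shift_stay (w := w) h hmerge hη
    exact ⟨(s, v', w), ⟨rfl, rfl, h'⟩, hstep⟩
  · dsimp only at hpair
    obtain ⟨rfl, rfl⟩ := Prod.mk.inj hpair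
    have h' := h.reset (A.hRr s s')
    exact ⟨(s', _, w'), ⟨rfl, rfl, h'⟩, .inr ⟨(h.sat_iff _).2 hinv, (h.sat_iff _).2 hcond, rfl,
      (h'.sat_iff _).2 hinv', hstack⟩⟩

theorem Reach.exists_gReach (hreach : Reach A c c') (h : AbstractsConfig v₀ c g) :
    ∃ g', AbstractsConfig v₀ c' g' ∧ GReach A g g' :=
  transGen_of_simulation Step.exists_gReach hreach h

theorem GReach.exists_reach (hreach : GReach A g g') (h : AbstractsConfig v₀ c g) :
    ∃ c', AbstractsConfig v₀ c' g' ∧ Reach A c c' :=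
  transGen_of_simulation (sim := fun g c => AbstractsConfig v₀ c g)
    (fun hstep h => (GStep.exists_step hstep h).imp fun _ => And.imp_right .single) hreach h

end Simulation

section InitialPattern

variable {k : ℕ} {va vb v₀ v₁ : Val k} {η η₀ : PatSeq k}

theorem PatternOf.self_of_patternOf (hself : PatternOf va va η₀) (hab : PatternOf va vb η)
    (h₀₁ : PatternOf v₀ v₁ η) (h₀ : Initial v₀) : PatternOf v₀ v₀ η₀ := by
  have hproj : ∀ (v v' : Val k) x, pairFract v v x = pairFract v v' (x.1, false) := by
    rintro v v' ⟨i, _ | _⟩ <;> rfl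
  refine (hself.isLevelSeq.congr_of_lt_iff fun x _ y _ => ?_).patternOf h₀
  rw [hproj va vb, hproj va vb, hproj v₀ v₁, hproj v₀ v₁, ← hab.posOf_lt_posOf_iff,
    h₀₁.posOf_lt_posOf_iff]

theorem exists_abstracts_self (hva : Initial va) (hη₀ : PatternOf va va η₀) {u₀ : DVal k}
    (hu₀ : u₀ 0 = 0) : ∃ v₀, Abstracts v₀ v₀ η₀ u₀ := by
  have hva : va 0 = 0 := hva
  let v₀ : Val k := fun j => u₀ j + Int.fract (va j)
  have hinit : Initial v₀ := by simp [Initial, v₀, hu₀, hva]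
  have hval : IsVal v₀ := fun j => add_nonneg (Nat.cast_nonneg _) (Int.fract_nonneg _)
  have hrel : relFract v₀ = relFract va := by funext j; simp [relFract, v₀]
  have hpair : pairFract va va = pairFract v₀ v₀ := by
    funext ⟨j, b⟩
    cases b <;> exact congrFun hrel.symm j
  exact ⟨v₀, hinit, hval, (hpair ▸ hη₀.isLevelSeq).patternOf hinit,
    funext fun j => by simp [intPart, v₀]⟩

end InitialPattern

theorem pattern_graph_simulation_general {k : ℕ} {S Γ : Type} (A : PTA k S Γ) (s₀ s₁ : S)
    {η η₀ : PatSeq k} {va vb : Val k} (hva : Initial va) (hη : PatternOf va vb η)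
    (hη₀ : PatternOf va va η₀) (w₀ w₁ : List Γ) (u₀ u₁ : DVal k) (hu₀ : u₀ 0 = 0) :
    ReachPat A η s₀ u₀ w₀ s₁ u₁ w₁ ↔ GReach A (s₀, η₀, u₀, w₀) (s₁, η, u₁, w₁) := by
  constructor
  · rintro ⟨v₀, v₁, hv₀, -, hinit, rfl, rfl, hpat, hreach⟩
    have hstart : AbstractsConfig v₀ (s₀, v₀, w₀) (s₀, η₀, intPart v₀, w₀) :=
      ⟨rfl, rfl, hinit, hv₀, hη₀.self_of_patternOf hη hpat hinit, rfl⟩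
    obtain ⟨⟨_, η', _, _⟩, ⟨rfl, rfl, hend⟩, hgreach⟩ := Reach.exists_gReach hreach hstart
    obtain rfl : η' = η := hend.patternOf.isLevelSeq.unique hpat.isLevelSeq
    obtain rfl := hend.intPart_eq
    exact hgreach
  · intro hgreach
    obtain ⟨v₀, hstart⟩ := exists_abstracts_self hva hη₀ hu₀
    have hconfig : AbstractsConfig v₀ (s₀, v₀, w₀) (s₀, η₀, u₀, w₀) := ⟨rfl, rfl, hstart⟩
    obtain ⟨⟨_, v₁, _⟩, ⟨rfl, rfl, hend⟩, hreach⟩ := GReach.exists_reach hgreach hconfig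
    exact ⟨v₀, v₁, hstart.isVal, hend.isVal, hstart.initial, hstart.intPart_eq, hend.intPart_eq,
      hend.patternOf, hreach⟩

/-- Lemma `Presburgersimulation`. Let `A` be a PTA with pattern graph
`G`. For any states `s₀, s₁`, any pattern `η` (with `η₀ = init(η)`, the pattern of
`(v₀,v₀)` for any initialized pair `(v₀,v₁)` of pattern `η`), any stack words `w₀, w₁`,
and any discrete valuations `u₀, u₁` with `u₀(0) = 0`:
`(s₀,u₀,w₀) →*_{A,η} (s₁,u₁,w₁)` iff `(s₀,init(η),u₀,w₀) →*_G (s₁,η,u₁,w₁)`. -/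
theorem pattern_graph_simulation (k : ℕ) (hk : 1 ≤ k) {S Γ : Type} [Fintype S] [Fintype Γ]
    (A : PTA k S Γ) (s₀ s₁ : S)
    (η η₀ : PatSeq k) (hη : IsPattern η)
    (hinit : ∃ va vb : Val k, IsVal va ∧ IsVal vb ∧ Initial va ∧
      PatternOf va vb η ∧ PatternOf va va η₀)
    (w₀ w₁ : List Γ) (u₀ u₁ : DVal k) (hu₀ : u₀ 0 = 0) :
    ReachPat A η s₀ u₀ w₀ s₁ u₁ w₁ ↔
      GReach A (s₀, η₀, u₀, w₀) (s₁, η, u₁, w₁) := by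
  obtain ⟨va, vb, -, -, hva, hab, haa⟩ := hinit
  exact pattern_graph_simulation_general A s₀ s₁ hva hab haa w₀ w₁ u₀ u₁ hu₀

end PTApaper
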